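/- Let t, α be real and pc > 0 with π·α²/2 = t·(pc + 1)²/pc. Define g : ℝ → ℝ by g(u) = (πα²/4)·(pc + 1 + u/√2)/((pc + 1)² + u² + √2·(pc + 1)·u) + (t/4)·log(pc² + u² + √2·pc·u). Then g′(0) = 0 and g″(0) = 0. -/

import Mathlib

open Real

/-!
On the contour `w = pc + u * exp (iπ/4)` the function `g` is the real part of
`Φ w = A / (w + 1) + (t / 2) * log w` with `A = π * α ^ 2 / 4`, so that
`g′(0) = Re (Φ′(pc) * exp (iπ/4))` and `g″(0) = Re (Φ″(pc) * exp (iπ/4) ^ 2)`.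
Both `Φ′(pc)` and `Φ″(pc)` are real. The defining relation of the portcullis variable says
that `Φ′(pc) = 0`, and `exp (iπ/4) ^ 2 = i` makes the second real part vanish.
-/

/-- The direction `exp (iπ/4)` in which the steepest-descent contour leaves the real axis. -/
noncomputable def steepestDir : ℂ := Complex.exp (π / 4 * Complex.I)

/-- The steepest-descent contour `w = p + u * exp (iπ/4)` through the real point `p`, extended to
the whole line and parametrised by arc length. -/
noncomputable def contour (p u : ℝ) : ℂ := p + u * steepestDir

/-- The derivative `Φ′` of the complex phase `Φ w = A / (w + 1) + (t / 2) * log w`. Working with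
`Φ′` instead of `Φ` avoids choosing a branch of the logarithm. -/
noncomputable def phaseDeriv (A t : ℝ) (w : ℂ) : ℂ := t / (2 * w) - A / (w + 1) ^ 2

lemma steepestDir_sq : steepestDir ^ 2 = Complex.I := by
  have hangle : ((2 : ℕ) : ℂ) * (π / 4 * Complex.I) = π / 2 * Complex.I := by
    push_cast
    ring
  rw [steepestDir, ← Complex.exp_nat_mul, hangle, Complex.exp_pi_div_two_mul_I]

lemma steepestDir_re : steepestDir.re = √2 / 2 := by
  rw [steepestDir, ← cos_pi_div_four, ← Complex.exp_ofReal_mul_I_re]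
  push_cast
  rfl

lemma steepestDir_im : steepestDir.im = √2 / 2 := by
  rw [steepestDir, ← sin_pi_div_four, ← Complex.exp_ofReal_mul_I_im]
  push_cast
  rfl

lemma contour_zero (p : ℝ) : contour p 0 = p := by simp [contour]

lemma contour_add_one (p u : ℝ) : contour (p + 1) u = contour p u + 1 := by
  simp only [contour, Complex.ofReal_add, Complex.ofReal_one]
  ring

lemma contour_re (p u : ℝ) : (contour p u).re = p + u / √2 := by
  rw [← mul_one_div u, ← sqrt_div_self']
  simp [contour, steepestDir_re]

lemma contour_im (p u : ℝ) : (contour p u).im = u / √2 := by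
  rw [← mul_one_div u, ← sqrt_div_self']
  simp [contour, steepestDir_im]

lemma contour_ne_zero {p : ℝ} (hp : p ≠ 0) (u : ℝ) : contour p u ≠ 0 := by
  intro h
  have him : u / √2 = 0 := by rw [← contour_im p, h, Complex.zero_im]
  have hre : p + u / √2 = 0 := by rw [← contour_re, h, Complex.zero_re]
  exact hp (by rwa [him, add_zero] at hre)

lemma normSq_contour (p u : ℝ) :
    Complex.normSq (contour p u) = p ^ 2 + u ^ 2 + √2 * p * u := by
  have hsq : √2 ^ 2 = 2 := sq_sqrt zero_le_two
  rw [Complex.normSq_apply, contour_re, contour_im]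
  field_simp
  linear_combination (-u ^ 2 - √2 * p * u) * hsq

lemma inv_contour_re (p u : ℝ) :
    (contour p u)⁻¹.re = (p + u / √2) / (p ^ 2 + u ^ 2 + √2 * p * u) := by
  rw [Complex.inv_re, contour_re, normSq_contour]

lemma hasDerivAt_contour (p u : ℝ) : HasDerivAt (contour p) steepestDir u :=
  (((hasDerivAt_id u).ofReal_comp.mul_const steepestDir).const_add (p : ℂ)).congr_deriv (by simp)

lemma hasDerivAt_re {γ : ℝ → ℂ} {γ' : ℂ} {u : ℝ} (hγ : HasDerivAt γ γ' u) :
    HasDerivAt (fun x => (γ x).re) γ'.re u :=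
  Complex.reCLM.hasFDerivAt.comp_hasDerivAt u hγ

lemma hasDerivAt_log_normSq {γ : ℝ → ℂ} {γ' : ℂ} {u : ℝ} (hγ : HasDerivAt γ γ' u)
    (h0 : γ u ≠ 0) :
    HasDerivAt (fun x => log (Complex.normSq (γ x))) (2 * (γ' / γ u).re) u := by
  simp only [Complex.normSq_eq_norm_sq]
  refine (hγ.norm_sq.log (by simpa using h0)).congr_deriv ?_
  rw [Complex.inner, Complex.div_re, Complex.normSq_eq_norm_sq, Complex.mul_re,
    Complex.conj_re, Complex.conj_im]
  ring

lemma hasDerivAt_phase_contour (A t : ℝ) {p : ℝ} (hp : p ≠ 0) (hp1 : p ≠ -1) (u : ℝ) :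
    HasDerivAt
      (fun x => A * (contour (p + 1) x)⁻¹.re + t / 4 * log (Complex.normSq (contour p x)))
      (phaseDeriv A t (contour p u) * steepestDir).re u := by
  have hpole : contour (p + 1) u ≠ 0 := contour_ne_zero (mt eq_neg_of_add_eq_zero_left hp1) u
  have hinv := (hasDerivAt_re ((hasDerivAt_contour (p + 1) u).fun_inv hpole)).const_mul A
  have hlog := (hasDerivAt_log_normSq (hasDerivAt_contour p u) (contour_ne_zero hp u)).const_mul
    (t / 4)
  refine (hinv.add hlog).congr_deriv ?_
  have hsplit : phaseDeriv A t (contour p u) * steepestDir =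
      A * (-steepestDir / contour (p + 1) u ^ 2) +
        (t / 2 : ℝ) * (steepestDir / contour p u) := by
    rw [phaseDeriv, contour_add_one]
    push_cast
    ring
  rw [hsplit, Complex.add_re, Complex.re_ofReal_mul, Complex.re_ofReal_mul]
  ring

lemma phaseDeriv_ofReal (A t p : ℝ) :
    phaseDeriv A t p = (t / (2 * p) - A / (p + 1) ^ 2 : ℝ) := by
  push_cast
  rfl

lemma phaseDeriv_ofReal_eq_zero_iff (A t : ℝ) {p : ℝ} (hp : p ≠ 0) (hp1 : p ≠ -1) :
    phaseDeriv A t p = 0 ↔ 2 * A = t * (p + 1) ^ 2 / p := by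
  have hpole : p + 1 ≠ 0 := mt eq_neg_of_add_eq_zero_left hp1
  rw [phaseDeriv_ofReal, Complex.ofReal_eq_zero, sub_eq_zero,
    div_eq_div_iff (by positivity) (by positivity), eq_div_iff hp]
  constructor <;> intro h <;> linarith

lemma hasDerivAt_phaseDeriv_ofReal (A t : ℝ) {p : ℝ} (hp : p ≠ 0) (hp1 : p ≠ -1) :
    HasDerivAt (phaseDeriv A t)
      (2 * A / (p + 1) ^ 3 - t / (2 * p ^ 2) : ℝ) (p : ℂ) := by
  have hp' : (p : ℂ) ≠ 0 := Complex.ofReal_ne_zero.mpr hp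
  have hpole : (p : ℂ) + 1 ≠ 0 := by exact_mod_cast mt eq_neg_of_add_eq_zero_left hp1
  have hlog := (hasDerivAt_const (p : ℂ) (t : ℂ)).fun_div ((hasDerivAt_id (p : ℂ)).const_mul 2)
    (mul_ne_zero two_ne_zero hp')
  have hinv := (hasDerivAt_const (p : ℂ) (A : ℂ)).fun_div
    (((hasDerivAt_id (p : ℂ)).add_const 1).fun_pow 2) (pow_ne_zero 2 hpole)
  refine (hlog.sub hinv).congr_deriv ?_
  simp only [id]
  push_cast
  field_simp
  ring

lemma deriv_deriv_eq_neg_im_of_hasDerivAt_contour {h : ℝ → ℝ} {F : ℂ → ℂ} {c : ℂ} {p u : ℝ}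
    (hh : ∀ x, HasDerivAt h (F (contour p x) * steepestDir).re x)
    (hF : HasDerivAt F c (contour p u)) :
    deriv (deriv h) u = -c.im := by
  have hcomp := (hF.comp u (hasDerivAt_contour p u)).mul_const steepestDir
  rw [mul_assoc, ← sq, steepestDir_sq] at hcomp
  rw [funext fun x => (hh x).deriv, ← Complex.mul_I_re]
  exact (hasDerivAt_re hcomp).deriv

theorem stmt9_general (A t pc : ℝ) (hpc : pc ≠ 0) (hpc1 : pc ≠ -1) (g : ℝ → ℝ)
    (hg : ∀ u : ℝ, g u =
      A * (pc + 1 + u / √2) / ((pc + 1) ^ 2 + u ^ 2 + √2 * (pc + 1) * u)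
        + t / 4 * log (pc ^ 2 + u ^ 2 + √2 * pc * u)) :
    (deriv g 0 = 0 ↔ 2 * A = t * (pc + 1) ^ 2 / pc) ∧ deriv (deriv g) 0 = 0 := by
  have hphase : g = fun u =>
      A * (contour (pc + 1) u)⁻¹.re + t / 4 * log (Complex.normSq (contour pc u)) := by
    funext u
    rw [hg, inv_contour_re, normSq_contour, mul_div_assoc]
  have hg' (u : ℝ) : HasDerivAt g (phaseDeriv A t (contour pc u) * steepestDir).re u :=
    hphase ▸ hasDerivAt_phase_contour A t hpc hpc1 u
  constructor
  · rw [(hg' 0).deriv, contour_zero, ← phaseDeriv_ofReal_eq_zero_iff A t hpc hpc1,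
      phaseDeriv_ofReal, Complex.re_ofReal_mul, steepestDir_re, Complex.ofReal_eq_zero]
    simp
  · have hΦ' := hasDerivAt_phaseDeriv_ofReal A t hpc hpc1
    rw [← contour_zero pc] at hΦ'
    rw [deriv_deriv_eq_neg_im_of_hasDerivAt_contour hg' hΦ', Complex.ofReal_im, neg_zero]

/-- Eq. (31b) of the paper: the saddle-point property `g′(0) = 0 = g″(0)` forced
by the defining relation `π·α²/2 = t·(pc + 1)²/pc` of the portcullis variable. -/
theorem stmt9 (t α pc : ℝ) (hpc : 0 < pc)
    (hsaddle : π * α ^ 2 / 2 = t * (pc + 1) ^ 2 / pc)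
    (g : ℝ → ℝ)
    (hg : ∀ u : ℝ, g u =
      π * α ^ 2 / 4 * (pc + 1 + u / Real.sqrt 2)
          / ((pc + 1) ^ 2 + u ^ 2 + Real.sqrt 2 * (pc + 1) * u)
        + t / 4 * Real.log (pc ^ 2 + u ^ 2 + Real.sqrt 2 * pc * u)) :
    deriv g 0 = 0 ∧ deriv (deriv g) 0 = 0 := by
  have hcrit := stmt9_general (π * α ^ 2 / 4) t pc hpc.ne' (by linarith) g hg
  exact ⟨hcrit.1.mpr (by linarith), hcrit.2⟩
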